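/- Fix D* ∈ [0.005, 0.995], ε ∈ (0, D*), f_n = (D* − ε)/(2n), and k ∈ {0, 1, …, n}. Let F_k be the set of λ ∈ ℝ₊ⁿ with Σᵢ λᵢ = n such that, writing t = t_wf(λ, D*) (the water level with D_wf(λ, t) = D*), one has λᵢ ≥ t + ε f_n for all i ≤ k and 0 ≤ λᵢ ≤ t − ε f_n for all i > k. If λ* maximizes G(λ) = 𝐑_rc(λ, D*) − 𝐑_wf(λ, D*) over F_k, then the coordinates of λ* take at most 5 distinct values. -/

import Mathlib

open Real

/-- Waterfilling distortion `D_wf(λ, t) = (1/n) Σᵢ min{λᵢ, t}`. -/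
noncomputable def Dwf {n : ℕ} (lam : Fin n → ℝ) (t : ℝ) : ℝ :=
  (1 / (n : ℝ)) * ∑ i, min (lam i) t

/-- Waterfilling rate `R_wf(λ, t) = (1/(2n)) Σᵢ max{0, log₂(λᵢ/t)}`. -/
noncomputable def Rwf {n : ℕ} (lam : Fin n → ℝ) (t : ℝ) : ℝ :=
  (1 / (2 * (n : ℝ))) * ∑ i, max 0 (Real.logb 2 (lam i / t))

/-- Random-coding distortion `D_rc(λ, T) = (1/n) Σᵢ λᵢ/(1 + λᵢ T)`. -/
noncomputable def Drc {n : ℕ} (lam : Fin n → ℝ) (T : ℝ) : ℝ :=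
  (1 / (n : ℝ)) * ∑ i, lam i / (1 + lam i * T)

/-- Random-coding rate `R_rc(λ, T) = (1/(2n)) Σᵢ log₂(1 + λᵢ T)`. -/
noncomputable def Rrc {n : ℕ} (lam : Fin n → ℝ) (T : ℝ) : ℝ :=
  (1 / (2 * (n : ℝ))) * ∑ i, Real.logb 2 (1 + lam i * T)

/-- `t_wf(λ, D)`: the water level `t > 0` with `D_wf(λ, t) = D`. -/
noncomputable def twfD {n : ℕ} (lam : Fin n → ℝ) (D : ℝ) : ℝ :=
  Classical.epsilon fun t => 0 < t ∧ Dwf lam t = D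

/-- `𝐑_wf(λ, D) = R_wf(λ, t_wf(λ, D))`. -/
noncomputable def RRwf {n : ℕ} (lam : Fin n → ℝ) (D : ℝ) : ℝ :=
  Rwf lam (twfD lam D)

/-- `T > 0` solving `D_rc(λ, T) = D`. -/
noncomputable def TrcD {n : ℕ} (lam : Fin n → ℝ) (D : ℝ) : ℝ :=
  Classical.epsilon fun T => 0 < T ∧ Drc lam T = D

/-- `𝐑_rc(λ, D) = R_rc(λ, T)` where `T > 0` solves `D_rc(λ, T) = D`. -/
noncomputable def RRrc {n : ℕ} (lam : Fin n → ℝ) (D : ℝ) : ℝ :=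
  Rrc lam (TrcD lam D)

/-- The feasible set `F_k`: spectra with trace `n` whose first `k` coordinates are
at least `t_wf(λ, D*) + ε f_n` (active set) and whose remaining coordinates are at
most `t_wf(λ, D*) - ε f_n` (inactive set), with `f_n = (D* - ε)/(2n)`.
(Indices of `Fin n` are 0-based: `i ≤ k` in 1-based notation is `(i : ℕ) < k`.) -/
def Fk (n : ℕ) (k : ℕ) (Dstar ε : ℝ) (lam : Fin n → ℝ) : Prop :=
  (∀ i, 0 ≤ lam i) ∧ (∑ i, lam i) = (n : ℝ) ∧
  (∀ i : Fin n, (i : ℕ) < k →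
    twfD lam Dstar + ε * ((Dstar - ε) / (2 * (n : ℝ))) ≤ lam i) ∧
  (∀ i : Fin n, k ≤ (i : ℕ) →
    lam i ≤ twfD lam Dstar - ε * ((Dstar - ε) / (2 * (n : ℝ))))

open Filter Topology in
lemma calc_lemma {ι : Type*} (s : Finset ι) (l : ι → ℝ) (hl : ∀ i, 0 ≤ l i)
    (C x y T0 m : ℝ) (hm : 0 ≤ m) (hmx : m < x) (hxy : x < y) (hT0 : 0 < T0)
    (hC : ∑ i ∈ s, l i / (1 + l i * T0) + (x / (1 + x * T0) + y / (1 + y * T0)) = C)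
    (hmax : ∀ x' y' T : ℝ, 0 < T → x' + y' = x + y → m < x' → m < y' →
      ∑ i ∈ s, l i / (1 + l i * T) + (x' / (1 + x' * T) + y' / (1 + y' * T)) = C →
      ∑ i ∈ s, log (1 + l i * T) + (log (1 + x' * T) + log (1 + y' * T)) - (log x' + log y') ≤
      ∑ i ∈ s, log (1 + l i * T0) + (log (1 + x * T0) + log (1 + y * T0)) - (log x + log y)) :
    C * (x * y * T0 * (2 + (x + y) * T0)) =
      (∑ i ∈ s, (l i) ^ 2 / (1 + l i * T0) ^ 2 +
        (x ^ 2 / (1 + x * T0) ^ 2 + y ^ 2 / (1 + y * T0) ^ 2)) *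
      ((1 + x * T0) * (1 + y * T0) * (1 + (x + y) * T0)) := by
  have hx : 0 < x := by linarith
  have hy : 0 < y := by linarith
  have hpos : ∀ i, 0 < 1 + l i * T0 := fun i => by have := mul_nonneg (hl i) hT0.le; linarith
  set p := x + y with hp
  set K : ℝ → ℝ := fun T => C - ∑ i ∈ s, l i / (1 + l i * T) with hK
  set q : ℝ → ℝ := fun T => (K T * (1 + p * T) - p) / (2 * T - K T * T ^ 2) with hq
  set Q := ∑ i ∈ s, (l i) ^ 2 / (1 + l i * T0) ^ 2 with hQ
  have hKd : HasDerivAt K Q T0 := by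
    have h1 : ∀ i ∈ s, HasDerivAt (fun T => l i / (1 + l i * T))
        (- ((l i) ^ 2 / (1 + l i * T0) ^ 2)) T0 := by
      intro i _
      have h2 : HasDerivAt (fun T : ℝ => 1 + l i * T) (l i) T0 := by
        simpa using ((hasDerivAt_id T0).const_mul (l i)).const_add 1
      have h3 := (hasDerivAt_const T0 (l i)).div h2 (hpos i).ne'
      refine h3.congr_deriv ?_
      ring
    have := (HasDerivAt.fun_sum h1).const_sub C
    refine this.congr_deriv ?_
    simp [hQ]
  have hLd : HasDerivAt (fun T => ∑ i ∈ s, log (1 + l i * T)) (∑ i ∈ s, l i / (1 + l i * T0)) T0 := by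
    apply HasDerivAt.fun_sum
    intro i _
    have h2 : HasDerivAt (fun T : ℝ => 1 + l i * T) (l i) T0 := by
      simpa using ((hasDerivAt_id T0).const_mul (l i)).const_add 1
    exact h2.log (hpos i).ne'
  have hX : 0 < 1 + x * T0 := by positivity
  have hY : 0 < 1 + y * T0 := by positivity
  have hK0 : K T0 = x / (1 + x * T0) + y / (1 + y * T0) := by simp only [hK]; linarith
  have hden : 2 * T0 - K T0 * T0 ^ 2 = T0 * (2 + p * T0) / ((1 + x * T0) * (1 + y * T0)) := by
    rw [hK0, hp]; field_simp; ring
  have hdenpos : 0 < 2 * T0 - K T0 * T0 ^ 2 := by rw [hden]; positivity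
  have hq0 : q T0 = x * y := by
    simp only [hq]
    rw [div_eq_iff hdenpos.ne', hK0, hp]; field_simp; ring
  obtain ⟨q', hqd⟩ : ∃ q', HasDerivAt q q' T0 := by
    have a1 : HasDerivAt (fun T : ℝ => 1 + p * T) p T0 := by
      simpa using ((hasDerivAt_id T0).const_mul p).const_add 1
    have a2 : HasDerivAt (fun T : ℝ => 2 * T) 2 T0 := by
      simpa using ((hasDerivAt_id T0).const_mul 2)
    have a3 : HasDerivAt (fun T : ℝ => T ^ 2) (2 * T0) T0 := by
      simpa using (hasDerivAt_pow 2 T0)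
    exact ⟨_, ((hKd.mul a1).sub_const p).div (a2.sub (hKd.mul a3)) hdenpos.ne'⟩
  have hdenev : ∀ᶠ T in 𝓝 T0, 0 < 2 * T - K T * T ^ 2 := by
    have hc : ContinuousAt (fun T => 2 * T - K T * T ^ 2) T0 :=
      (continuousAt_const.mul continuousAt_id).sub (hKd.continuousAt.mul (continuousAt_id.pow 2))
    exact hc.eventually (lt_mem_nhds hdenpos)
  have hTev : ∀ᶠ T in 𝓝 T0, 0 < T := lt_mem_nhds hT0
  have hid : ∀ T, 0 < 2 * T - K T * T ^ 2 → p + 2 * q T * T = K T * (1 + p * T + q T * T ^ 2) := by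
    intro T hT
    have : q T * (2 * T - K T * T ^ 2) = K T * (1 + p * T) - p := by
      simp only [hq]; exact div_mul_cancel₀ _ hT.ne'
    linear_combination this
  have hWd : HasDerivAt (fun T => 1 + p * T + q T * T ^ 2) (p + (q' * T0 ^ 2 + q T0 * (2 * T0))) T0 := by
    have a1 : HasDerivAt (fun T : ℝ => 1 + p * T) p T0 := by
      simpa using ((hasDerivAt_id T0).const_mul p).const_add 1
    have a3 : HasDerivAt (fun T : ℝ => T ^ 2) (2 * T0) T0 := by
      simpa using (hasDerivAt_pow 2 T0)
    exact a1.add (hqd.mul a3)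
  have hrel : 2 * (q' * T0 + q T0) = Q * (1 + p * T0 + q T0 * T0 ^ 2) +
      K T0 * (p + (q' * T0 ^ 2 + q T0 * (2 * T0))) := by
    have e1 : HasDerivAt (fun T => p + 2 * (q T * T)) (2 * (q' * T0 + q T0 * 1)) T0 :=
      ((hqd.mul (hasDerivAt_id T0)).const_mul 2).const_add p
    have e2 := hKd.mul hWd
    have e3 : (fun T => p + 2 * (q T * T)) =ᶠ[𝓝 T0] (K * fun T => 1 + p * T + q T * T ^ 2) := by
      filter_upwards [hdenev] with T hT
      have := hid T hT
      simp only [Pi.mul_apply]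
      linarith
    have := (e2.congr_of_eventuallyEq e3).unique e1
    linarith
  have hW0 : 1 + p * T0 + q T0 * T0 ^ 2 = (1 + x * T0) * (1 + y * T0) := by
    rw [hq0, hp]; ring
  set F : ℝ → ℝ := fun T => ∑ i ∈ s, log (1 + l i * T) + log (1 + p * T + q T * T ^ 2) - log (q T) with hF
  have hFd : HasDerivAt F (∑ i ∈ s, l i / (1 + l i * T0) + (p + (q' * T0 ^ 2 + q T0 * (2 * T0))) /
      (1 + p * T0 + q T0 * T0 ^ 2) - q' / q T0) T0 := by
    refine (hLd.add (hWd.log ?_)).sub (hqd.log ?_)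
    · rw [hW0]; positivity
    · rw [hq0]; positivity
  have hFmax : IsLocalMax F T0 := by
    set r : ℝ → ℝ := fun T => √(p ^ 2 - 4 * q T) with hr
    have hr0 : r T0 = y - x := by
      simp only [hr, hq0, hp]
      rw [show (x + y) ^ 2 - 4 * (x * y) = (y - x) ^ 2 by ring]
      exact Real.sqrt_sq (by linarith)
    have hrc : ContinuousAt r T0 :=
      (continuousAt_const.sub (continuousAt_const.mul hqd.continuousAt)).sqrt
    have h1 : ∀ᶠ T in 𝓝 T0, m < (p - r T) / 2 := by
      have hc : ContinuousAt (fun T => (p - r T) / 2) T0 := (continuousAt_const.sub hrc).div_const 2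
      apply hc.eventually (lt_mem_nhds _)
      show m < (p - r T0) / 2
      rw [hr0, hp]; linarith
    have h2 : ∀ᶠ T in 𝓝 T0, 0 < p ^ 2 - 4 * q T := by
      have hc : ContinuousAt (fun T => p ^ 2 - 4 * q T) T0 :=
        (continuousAt_const.sub (continuousAt_const.mul hqd.continuousAt))
      apply hc.eventually (lt_mem_nhds _)
      show 0 < p ^ 2 - 4 * q T0
      rw [hq0, hp]; nlinarith [mul_pos (sub_pos.2 hxy) (sub_pos.2 hxy)]
    filter_upwards [h1, h2, hdenev, hTev] with T g1 g2 g3 g4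
    have hrn : 0 ≤ r T := Real.sqrt_nonneg _
    have hrs : r T ^ 2 = p ^ 2 - 4 * q T := Real.sq_sqrt g2.le
    obtain ⟨x', hx'⟩ : ∃ x', x' = (p - r T) / 2 := ⟨_, rfl⟩
    obtain ⟨y', hy'⟩ : ∃ y', y' = (p + r T) / 2 := ⟨_, rfl⟩
    have hs : x' + y' = p := by rw [hx', hy']; ring
    have hpr : x' * y' = q T := by rw [hx', hy']; linarith
    rw [← hx'] at g1
    have g1' : m < y' := by rw [hy']; linarith
    have x'p : 0 < x' := by linarith
    have y'p : 0 < y' := by linarith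
    have X' : 0 < 1 + x' * T := by positivity
    have Y' : 0 < 1 + y' * T := by positivity
    have hW : 1 + p * T + q T * T ^ 2 = (1 + x' * T) * (1 + y' * T) := by
      rw [← hs, ← hpr]; ring
    have key := hmax x' y' T g4 hs g1 g1' (by
      have e := hid T g3
      have e2 : x' / (1 + x' * T) + y' / (1 + y' * T) = K T := by
        rw [div_add_div _ _ X'.ne' Y'.ne', div_eq_iff (by positivity), ← hW, ← e, ← hs, ← hpr]; ring
      rw [e2]; simp [hK])
    simp only [hF]
    rw [hW, hW0, hq0, ← hpr, Real.log_mul X'.ne' Y'.ne', Real.log_mul hX.ne' hY.ne',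
      Real.log_mul x'p.ne' y'p.ne', Real.log_mul hx.ne' hy.ne']
    exact key
  have hz := hFmax.hasDerivAt_eq_zero hFd
  have hsum : ∑ i ∈ s, l i / (1 + l i * T0) = C - (x / (1 + x * T0) + y / (1 + y * T0)) := by linarith
  rw [hsum, hW0, hq0] at hz
  rw [hW0, hq0, hK0] at hrel
  clear_value p Q q K F
  have hq's : q' * (T0 * (2 + p * T0)) =
      (Q + (x ^ 2 / (1 + x * T0) ^ 2 + y ^ 2 / (1 + y * T0) ^ 2)) * ((1 + x * T0) * (1 + y * T0)) ^ 2 := by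
    subst hp
    field_simp at hrel ⊢
    linear_combination hrel
  have hz2 : C * (x * y) * ((1 + x * T0) * (1 + y * T0)) = q' * (1 + p * T0) := by
    subst hp
    field_simp at hz
    linear_combination hz
  have hne : (1 + x * T0) * (1 + y * T0) ≠ 0 := by positivity
  apply mul_right_cancel₀ hne
  linear_combination (T0 * (2 + p * T0)) * hz2 + (1 + p * T0) * hq's

lemma Dwf_strict {n : ℕ} (hn : 1 ≤ n) (lam : Fin n → ℝ) (hs : ∑ i, lam i = (n : ℝ)) (s t : ℝ)
    (hst : s < t) (h1 : Dwf lam s < 1) : Dwf lam s < Dwf lam t := by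
  have hn' : (0 : ℝ) < n := by exact_mod_cast hn
  unfold Dwf at *
  apply mul_lt_mul_of_pos_left _ (by positivity)
  obtain ⟨i, hi⟩ : ∃ i, s < lam i := by
    by_contra! hc
    have : ∑ i, min (lam i) s = n := by
      rw [← hs]; exact Finset.sum_congr rfl (fun i _ => min_eq_left (hc i))
    rw [this, one_div, inv_mul_cancel₀ hn'.ne'] at h1
    exact lt_irrefl _ h1
  apply Finset.sum_lt_sum (fun j _ => min_le_min_left _ hst.le)
  refine ⟨i, Finset.mem_univ _, ?_⟩
  rw [min_eq_right hi.le]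
  exact lt_min hi hst

lemma twf_eq {n : ℕ} (hn : 1 ≤ n) (lam : Fin n → ℝ) (hs : ∑ i, lam i = (n : ℝ)) (D t : ℝ)
    (hD : D < 1) (ht : 0 < t) (h : Dwf lam t = D) : twfD lam D = t := by
  have hsp : 0 < twfD lam D ∧ Dwf lam (twfD lam D) = D :=
    Classical.epsilon_spec (p := fun t => 0 < t ∧ Dwf lam t = D) ⟨t, ht, h⟩
  rcases lt_trichotomy (twfD lam D) t with h1 | h1 | h1
  · have := Dwf_strict hn lam hs _ _ h1 (by rw [hsp.2]; exact hD)
    rw [hsp.2, h] at this; exact absurd this (lt_irrefl _)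
  · exact h1
  · have := Dwf_strict hn lam hs _ _ h1 (by rw [h]; exact hD)
    rw [hsp.2, h] at this; exact absurd this (lt_irrefl _)

lemma twf_spec {n : ℕ} (hn : 1 ≤ n) (lam : Fin n → ℝ) (h0 : ∀ i, 0 ≤ lam i)
    (hs : ∑ i, lam i = (n : ℝ)) (D : ℝ)
    (hD0 : 0 < D) (hD : D < 1) : 0 < twfD lam D ∧ Dwf lam (twfD lam D) = D := by
  have hn' : (0 : ℝ) < n := by exact_mod_cast hn
  apply Classical.epsilon_spec (p := fun t => 0 < t ∧ Dwf lam t = D)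
  have hz : Dwf lam 0 = 0 := by
    unfold Dwf
    rw [Finset.sum_eq_zero (fun i _ => min_eq_right (h0 i)), mul_zero]
  have ho : Dwf lam n = 1 := by
    unfold Dwf
    rw [show ∑ i, min (lam i) (n : ℝ) = n by
      rw [← hs]
      refine Finset.sum_congr rfl (fun i _ => min_eq_left ?_)
      exact Finset.single_le_sum (fun j _ => h0 j) (Finset.mem_univ i)]
    field_simp
  have hc : Continuous (Dwf lam) := by unfold Dwf; fun_prop
  obtain ⟨t, ht, h⟩ := intermediate_value_Icc hn'.le hc.continuousOn
    (show D ∈ Set.Icc (Dwf lam 0) (Dwf lam n) by rw [hz, ho]; exact ⟨hD0.le, hD.le⟩)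
  refine ⟨t, lt_of_le_of_ne ht.1 ?_, h⟩
  rintro rfl
  rw [hz] at h; exact hD0.ne h

lemma Drc_strict {n : ℕ} (hn : 1 ≤ n) (lam : Fin n → ℝ) (h0 : ∀ i, 0 ≤ lam i)
    (hs : ∑ i, lam i = (n : ℝ)) (S T : ℝ) (hS : 0 ≤ S) (hST : S < T) : Drc lam T < Drc lam S := by
  have hn' : (0 : ℝ) < n := by exact_mod_cast hn
  unfold Drc
  apply mul_lt_mul_of_pos_left _ (by positivity)
  have hT : 0 < T := by linarith
  obtain ⟨i, hi⟩ : ∃ i, 0 < lam i := by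
    by_contra! hc
    have := Finset.sum_nonpos (fun i (_ : i ∈ Finset.univ) => hc i)
    linarith
  refine Finset.sum_lt_sum (fun j _ => ?_) ⟨i, Finset.mem_univ _, ?_⟩
  · have := h0 j
    gcongr
  · have : lam i * S < lam i * T := by gcongr
    have : 0 ≤ lam i * S := by positivity
    gcongr

lemma Trc_eq {n : ℕ} (hn : 1 ≤ n) (lam : Fin n → ℝ) (h0 : ∀ i, 0 ≤ lam i)
    (hs : ∑ i, lam i = (n : ℝ)) (D T : ℝ) (hT : 0 < T) (h : Drc lam T = D) : TrcD lam D = T := by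
  have hsp : 0 < TrcD lam D ∧ Drc lam (TrcD lam D) = D :=
    Classical.epsilon_spec (p := fun t => 0 < t ∧ Drc lam t = D) ⟨T, hT, h⟩
  rcases lt_trichotomy (TrcD lam D) T with h1 | h1 | h1
  · have := Drc_strict hn lam h0 hs _ _ hsp.1.le h1
    rw [hsp.2, h] at this; exact absurd this (lt_irrefl _)
  · exact h1
  · have := Drc_strict hn lam h0 hs _ _ hT.le h1
    rw [hsp.2, h] at this; exact absurd this (lt_irrefl _)

lemma Trc_spec {n : ℕ} (hn : 1 ≤ n) (lam : Fin n → ℝ) (h0 : ∀ i, 0 ≤ lam i)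
    (hs : ∑ i, lam i = (n : ℝ)) (D : ℝ)
    (hD0 : 0 < D) (hD : D < 1) : 0 < TrcD lam D ∧ Drc lam (TrcD lam D) = D := by
  have hn' : (0 : ℝ) < n := by exact_mod_cast hn
  apply Classical.epsilon_spec (p := fun t => 0 < t ∧ Drc lam t = D)
  have hz : Drc lam 0 = 1 := by
    unfold Drc
    simp [hs, hn'.ne']
  have ho : Drc lam (1 / D) ≤ D := by
    unfold Drc
    have : ∑ i, lam i / (1 + lam i * (1 / D)) ≤ ∑ i : Fin n, D := by
      refine Finset.sum_le_sum (fun i _ => ?_)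
      have := h0 i
      rw [div_le_iff₀ (by positivity)]
      have : D * (1 + lam i * (1 / D)) = D + lam i := by field_simp
      linarith
    rw [Finset.sum_const, Finset.card_univ, Fintype.card_fin, nsmul_eq_mul] at this
    calc _ ≤ 1 / (n : ℝ) * (n * D) := by gcongr
      _ = D := by field_simp
  have hc : ContinuousOn (Drc lam) (Set.Icc 0 (1 / D)) := by
    unfold Drc
    refine continuousOn_const.mul (continuousOn_finsetSum _ fun i _ => ?_)
    refine continuousOn_const.div (by fun_prop) (fun T hT => ?_)
    have := mul_nonneg (h0 i) hT.1
    linarith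
  obtain ⟨t, ht, h⟩ := intermediate_value_Icc' (by positivity) hc
    (show D ∈ Set.Icc (Drc lam (1 / D)) (Drc lam 0) by rw [hz]; exact ⟨ho, hD.le⟩)
  refine ⟨t, lt_of_le_of_ne ht.1 ?_, h⟩
  rintro rfl
  rw [hz] at h; exact hD.ne' h

/-- Replace coordinates `i` and `j` by `x` and `y`. -/
noncomputable def updPair {n : ℕ} (lam : Fin n → ℝ) (i j : Fin n) (x y : ℝ) : Fin n → ℝ :=
  fun l => if l = i then x else if l = j then y else lam l

lemma updPair_self {n : ℕ} (lam : Fin n → ℝ) (i j : Fin n) :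
    updPair lam i j (lam i) (lam j) = lam := by
  funext l
  unfold updPair
  split_ifs with h1 h2
  · rw [h1]
  · rw [h2]
  · rfl

lemma sum_updPair {n : ℕ} (lam : Fin n → ℝ) (i j : Fin n) (hij : i ≠ j) (x y : ℝ) (g : ℝ → ℝ) :
    ∑ l, g (updPair lam i j x y l) =
      ∑ l ∈ (Finset.univ.erase i).erase j, g (lam l) + (g x + g y) := by
  rw [← Finset.add_sum_erase _ _ (Finset.mem_univ i),
    ← Finset.add_sum_erase (Finset.univ.erase i) _ (Finset.mem_erase.2 ⟨hij.symm, Finset.mem_univ j⟩)]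
  have h1 : updPair lam i j x y i = x := by simp [updPair]
  have h2 : updPair lam i j x y j = y := by simp [updPair, hij.symm]
  rw [h1, h2, Finset.sum_congr rfl (g := fun l => g (lam l))]
  · ring
  · intro l hl
    simp only [Finset.mem_erase] at hl
    simp [updPair, hl.1, hl.2.1]

lemma sum_split {n : ℕ} (lam : Fin n → ℝ) (i j : Fin n) (hij : i ≠ j) (g : ℝ → ℝ) :
    ∑ l, g (lam l) =
      ∑ l ∈ (Finset.univ.erase i).erase j, g (lam l) + (g (lam i) + g (lam j)) := by
  have := sum_updPair lam i j hij (lam i) (lam j) g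
  rwa [updPair_self] at this

lemma Fk_upd {n : ℕ} (hn : 1 ≤ n) (k : ℕ) (D ε : ℝ) (hD0 : 0 < D) (hD : D < 1)
    (lam : Fin n → ℝ) (hmem : Fk n k D ε lam) (i j : Fin n) (hij : i ≠ j) (x y : ℝ)
    (hx : 0 ≤ x) (hy : 0 ≤ y) (hxy : x + y = lam i + lam j)
    (hmin : min x (twfD lam D) + min y (twfD lam D) =
      min (lam i) (twfD lam D) + min (lam j) (twfD lam D))
    (hxi : (i : ℕ) < k → twfD lam D + ε * ((D - ε) / (2 * (n : ℝ))) ≤ x)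
    (hxi' : k ≤ (i : ℕ) → x ≤ twfD lam D - ε * ((D - ε) / (2 * (n : ℝ))))
    (hyj : (j : ℕ) < k → twfD lam D + ε * ((D - ε) / (2 * (n : ℝ))) ≤ y)
    (hyj' : k ≤ (j : ℕ) → y ≤ twfD lam D - ε * ((D - ε) / (2 * (n : ℝ)))) :
    Fk n k D ε (updPair lam i j x y) ∧ twfD (updPair lam i j x y) D = twfD lam D := by
  obtain ⟨h0, hs, ha, hi⟩ := hmem
  obtain ⟨t0, ht⟩ := twf_spec hn lam h0 hs D hD0 hD
  have hs' : ∑ l, updPair lam i j x y l = n := by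
    have e1 := sum_updPair lam i j hij x y id
    have e2 := sum_split lam i j hij id
    simp only [id] at e1 e2
    linarith
  have htw : twfD (updPair lam i j x y) D = twfD lam D := by
    apply twf_eq hn _ hs' D _ hD t0
    rw [← ht, ht]
    have e1 := sum_updPair lam i j hij x y (fun z => min z (twfD lam D))
    have e2 := sum_split lam i j hij (fun z => min z (twfD lam D))
    calc _ = Dwf lam (twfD lam D) := by
          unfold Dwf; rw [e1, e2, hmin]
      _ = D := ht
  refine ⟨⟨?_, hs', ?_, ?_⟩, htw⟩
  · intro l; unfold updPair; split_ifs
    exacts [hx, hy, h0 l]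
  · rw [htw]; intro l hl; unfold updPair; split_ifs with h1 h2
    · subst h1; exact hxi hl
    · subst h2; exact hyj hl
    · exact ha l hl
  · rw [htw]; intro l hl; unfold updPair; split_ifs with h1 h2
    · subst h1; exact hxi' hl
    · subst h2; exact hyj' hl
    · exact hi l hl

lemma inactive_eq (n : ℕ) (hn : 1 ≤ n) (D ε : ℝ) (hD0 : 0 < D) (hD : D < 1)
    (hε : ε ∈ Set.Ioo (0 : ℝ) D) (k : ℕ) (lam : Fin n → ℝ) (hmem : Fk n k D ε lam)
    (hmax : ∀ lam' : Fin n → ℝ, Fk n k D ε lam' →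
      RRrc lam' D - RRwf lam' D ≤ RRrc lam D - RRwf lam D)
    (i j : Fin n) (hi : k ≤ (i : ℕ)) (hj : k ≤ (j : ℕ)) : lam i = lam j := by
  by_contra hne
  have hij : i ≠ j := fun h => hne (by rw [h])
  have hn' : (0 : ℝ) < n := by exact_mod_cast hn
  obtain ⟨h0, hs, ha, hin⟩ := id hmem
  obtain ⟨t0, ht⟩ := twf_spec hn lam h0 hs D hD0 hD
  obtain ⟨T0, hT⟩ := Trc_spec hn lam h0 hs D hD0 hD
  have hδ : 0 < ε * ((D - ε) / (2 * (n : ℝ))) := by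
    have := hε.1; have := sub_pos.2 hε.2; positivity
  obtain ⟨x, hx⟩ : ∃ x, x = lam i := ⟨_, rfl⟩
  obtain ⟨y, hy⟩ : ∃ y, y = lam j := ⟨_, rfl⟩
  obtain ⟨t, htt⟩ : ∃ t, t = twfD lam D := ⟨_, rfl⟩
  obtain ⟨T, hTT⟩ : ∃ T, T = TrcD lam D := ⟨_, rfl⟩
  have hx0 := h0 i
  have hy0 := h0 j
  have hxt := hin i hi
  have hyt := hin j hj
  rw [← hx] at hx0 hxt hne
  rw [← hy] at hy0 hyt hne
  rw [← htt] at hxt hyt t0 ht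
  rw [← hTT] at T0 hT
  obtain ⟨z, hz⟩ : ∃ z, z = (x + y) / 2 := ⟨_, rfl⟩
  have hz0 : 0 ≤ z := by rw [hz]; linarith
  have hzt : z ≤ t - ε * ((D - ε) / (2 * (n : ℝ))) := by rw [hz]; linarith
  obtain ⟨hF, htw⟩ := Fk_upd hn k D ε hD0 hD lam hmem i j hij z z hz0 hz0
    (by rw [← hx, ← hy, hz]; ring)
    (by rw [← hx, ← hy, ← htt, min_eq_left (by linarith), min_eq_left (by linarith),
          min_eq_left (by linarith), hz]; ring)
    (fun h => by omega) (fun _ => by rw [← htt]; exact hzt)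
    (fun h => by omega) (fun _ => by rw [← htt]; exact hzt)
  have hm := hmax _ hF
  obtain ⟨h0', hs', -, -⟩ := id hF
  obtain ⟨T0', hT'⟩ := Trc_spec hn _ h0' hs' D hD0 hD
  obtain ⟨lam', hl'⟩ : ∃ lam', lam' = updPair lam i j z z := ⟨_, rfl⟩
  obtain ⟨T', hTT'⟩ : ∃ T', T' = TrcD lam' D := ⟨_, rfl⟩
  rw [← hl'] at hm T0' hT' hs' h0' htw
  rw [← hTT'] at T0' hT'
  have hsq : 0 < (x - y) ^ 2 := by
    have : x - y ≠ 0 := sub_ne_zero.2 hne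
    positivity
  have hX : 0 < 1 + x * T := by positivity
  have hY : 0 < 1 + y * T := by positivity
  have hZ : 0 < 1 + z * T := by positivity
  have hprod : (1 + x * T) * (1 + y * T) < (1 + z * T) * (1 + z * T) := by
    have : (1 + z * T) * (1 + z * T) - (1 + x * T) * (1 + y * T) = (x - y) ^ 2 * T ^ 2 / 4 := by
      rw [hz]; ring
    have : 0 < (x - y) ^ 2 * T ^ 2 / 4 := by positivity
    linarith
  have hD1 : D < Drc lam' T := by
    rw [← hT]
    unfold Drc
    apply mul_lt_mul_of_pos_left _ (by positivity)
    have e1 := sum_updPair lam i j hij z z (fun w => w / (1 + w * T))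
    have e2 := sum_split lam i j hij (fun w => w / (1 + w * T))
    rw [hl', e1, e2, ← hx, ← hy]
    have e3 : ∀ w, 0 < 1 + w * T → w / (1 + w * T) = (1 - 1 / (1 + w * T)) / T := by
      intro w hw; field_simp; ring
    rw [e3 x hX, e3 y hY, e3 z hZ]
    have e4 : 1 / (1 + z * T) + 1 / (1 + z * T) < 1 / (1 + x * T) + 1 / (1 + y * T) := by
      rw [div_add_div _ _ hZ.ne' hZ.ne', div_add_div _ _ hX.ne' hY.ne',
        show 1 * (1 + z * T) + (1 + z * T) * 1 = 1 * (1 + y * T) + (1 + x * T) * 1 by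
          rw [hz]; ring]
      gcongr
    have e5 : (1 - 1 / (1 + x * T)) / T + (1 - 1 / (1 + y * T)) / T <
        (1 - 1 / (1 + z * T)) / T + (1 - 1 / (1 + z * T)) / T := by
      rw [← add_div, ← add_div]
      apply div_lt_div_of_pos_right _ T0
      linarith
    linarith
  have hTlt : T < T' := by
    by_contra! hc
    rcases hc.lt_or_eq with h | h
    · have := Drc_strict hn lam' h0' hs' _ _ T0'.le h
      linarith
    · rw [h] at hT'; linarith
  have hlog2 : 0 < Real.log 2 := Real.log_pos (by norm_num)
  have hR : RRrc lam D < RRrc lam' D := by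
    unfold RRrc
    rw [← hTT, ← hTT']
    calc Rrc lam T < Rrc lam' T := by
          unfold Rrc
          apply mul_lt_mul_of_pos_left _ (by positivity)
          have e1 := sum_updPair lam i j hij z z (fun w => Real.logb 2 (1 + w * T))
          have e2 := sum_split lam i j hij (fun w => Real.logb 2 (1 + w * T))
          rw [hl', e1, e2, ← hx, ← hy, ← Real.logb_mul hX.ne' hY.ne',
            ← Real.logb_mul hZ.ne' hZ.ne']
          have := Real.logb_lt_logb (b := 2) (by norm_num) (mul_pos hX hY) hprod
          linarith
      _ ≤ Rrc lam' T' := by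
          unfold Rrc
          apply mul_le_mul_of_nonneg_left _ (by positivity)
          refine Finset.sum_le_sum fun l _ => ?_
          have := h0' l
          apply Real.logb_le_logb_of_le (by norm_num) (by positivity)
          gcongr
  have hW : RRwf lam' D = RRwf lam D := by
    unfold RRwf
    rw [htw, ← htt]
    unfold Rwf
    have e1 := sum_updPair lam i j hij z z (fun w => max 0 (Real.logb 2 (w / t)))
    have e2 := sum_split lam i j hij (fun w => max 0 (Real.logb 2 (w / t)))
    have e3 : ∀ w, 0 ≤ w → w ≤ t → max 0 (Real.logb 2 (w / t)) = 0 := by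
      intro w hw hwt
      apply max_eq_left
      exact Real.logb_nonpos (by norm_num) (by positivity) ((div_le_one t0).2 hwt)
    rw [hl', e1, e2, ← hx, ← hy, e3 x hx0 (by linarith), e3 y hy0 (by linarith),
      e3 z hz0 (by linarith)]
  linarith

lemma active_rel (n : ℕ) (hn : 1 ≤ n) (D ε : ℝ) (hD0 : 0 < D) (hD : D < 1)
    (hε : ε ∈ Set.Ioo (0 : ℝ) D) (k : ℕ) (lam : Fin n → ℝ) (hmem : Fk n k D ε lam)
    (hmax : ∀ lam' : Fin n → ℝ, Fk n k D ε lam' →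
      RRrc lam' D - RRwf lam' D ≤ RRrc lam D - RRwf lam D)
    (i j : Fin n) (hi : (i : ℕ) < k) (hj : (j : ℕ) < k)
    (hit : twfD lam D + ε * ((D - ε) / (2 * (n : ℝ))) < lam i) (hlt : lam i < lam j) :
    (n * D) * (lam i * lam j * TrcD lam D * (2 + (lam i + lam j) * TrcD lam D)) =
      (∑ l, (lam l) ^ 2 / (1 + lam l * TrcD lam D) ^ 2) *
      ((1 + lam i * TrcD lam D) * (1 + lam j * TrcD lam D) *
        (1 + (lam i + lam j) * TrcD lam D)) := by
  have hij : i ≠ j := fun h => hlt.ne (by rw [h])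
  have hn' : (0 : ℝ) < n := by exact_mod_cast hn
  obtain ⟨h0, hs, ha, hin⟩ := id hmem
  obtain ⟨t0, ht⟩ := twf_spec hn lam h0 hs D hD0 hD
  obtain ⟨T0, hT⟩ := Trc_spec hn lam h0 hs D hD0 hD
  have hδ : 0 < ε * ((D - ε) / (2 * (n : ℝ))) := by
    have := hε.1; have := sub_pos.2 hε.2; positivity
  have hlog2 : 0 < Real.log 2 := Real.log_pos (by norm_num)
  have eQ := sum_split lam i j hij (fun w => w ^ 2 / (1 + w * TrcD lam D) ^ 2)
  rw [eQ]
  have eD : ∀ lam' : Fin n → ℝ, ∀ T, Drc lam' T = D ↔ ∑ l, lam' l / (1 + lam' l * T) = n * D := by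
    intro lam' T
    unfold Drc
    rw [one_div, inv_mul_eq_iff_eq_mul₀ hn'.ne']
  refine calc_lemma _ lam h0 (n * D) (lam i) (lam j) (TrcD lam D) _ (by positivity) hit hlt T0 ?_ ?_
  · have e2 := sum_split lam i j hij (fun w => w / (1 + w * TrcD lam D))
    rw [← e2]
    exact (eD _ _).1 hT
  · intro x y T hTp hsum hmx hmy hC
    have hx0 : 0 < x := by linarith
    have hy0 : 0 < y := by linarith
    obtain ⟨hF, htw⟩ := Fk_upd hn k D ε hD0 hD lam hmem i j hij x y hx0.le hy0.le hsum
      (by rw [min_eq_right (by linarith), min_eq_right (by linarith),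
          min_eq_right (by linarith), min_eq_right (by linarith)])
      (fun _ => hmx.le) (fun h => by omega) (fun _ => hmy.le) (fun h => by omega)
    have hm := hmax _ hF
    obtain ⟨h0', hs', -, -⟩ := id hF
    have hTe : TrcD (updPair lam i j x y) D = T := by
      apply Trc_eq hn _ h0' hs' _ _ hTp
      rw [eD]
      have e1 := sum_updPair lam i j hij x y (fun w => w / (1 + w * T))
      rw [e1, hC]
    unfold RRrc RRwf Rrc Rwf at hm
    rw [hTe, htw] at hm
    have e1 := sum_updPair lam i j hij x y (fun w => Real.logb 2 (1 + w * T))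
    have e2 := sum_split lam i j hij (fun w => Real.logb 2 (1 + w * TrcD lam D))
    have e3 := sum_updPair lam i j hij x y (fun w => max 0 (Real.logb 2 (w / twfD lam D)))
    have e4 := sum_split lam i j hij (fun w => max 0 (Real.logb 2 (w / twfD lam D)))
    have e5 : ∀ w, twfD lam D < w → max 0 (Real.logb 2 (w / twfD lam D)) =
        (Real.log w - Real.log (twfD lam D)) / Real.log 2 := by
      intro w hw
      rw [max_eq_right (Real.logb_nonneg (by norm_num) ((one_le_div t0).2 hw.le)), Real.logb,
        Real.log_div (by linarith) t0.ne']
    rw [e1, e2, e3, e4, e5 x (by linarith), e5 y (by linarith), e5 (lam i) (by linarith),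
      e5 (lam j) (by linarith), ← mul_sub, ← mul_sub] at hm
    have hm2 := le_of_mul_le_mul_left hm (by positivity)
    simp only [Real.logb, ← Finset.sum_div] at hm2
    have hm3 := mul_le_mul_of_nonneg_right hm2 hlog2.le
    field_simp at hm3
    rw [mul_comm T x, mul_comm T y, mul_comm _ (lam i), mul_comm _ (lam j)] at hm3
    linarith

lemma active_two (n : ℕ) (hn : 1 ≤ n) (D ε : ℝ) (hD0 : 0 < D) (hD : D < 1)
    (hε : ε ∈ Set.Ioo (0 : ℝ) D) (k : ℕ) (lam : Fin n → ℝ) (hmem : Fk n k D ε lam)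
    (hmax : ∀ lam' : Fin n → ℝ, Fk n k D ε lam' →
      RRrc lam' D - RRwf lam' D ≤ RRrc lam D - RRwf lam D)
    (i j m : Fin n) (hi : (i : ℕ) < k) (hj : (j : ℕ) < k) (hmk : (m : ℕ) < k)
    (hit : twfD lam D + ε * ((D - ε) / (2 * (n : ℝ))) < lam i)
    (hjt : twfD lam D + ε * ((D - ε) / (2 * (n : ℝ))) < lam j)
    (hmt : twfD lam D + ε * ((D - ε) / (2 * (n : ℝ))) < lam m)
    (hij : lam i ≠ lam j) (him : lam i ≠ lam m) : lam j = lam m := by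
  have hn' : (0 : ℝ) < n := by exact_mod_cast hn
  obtain ⟨h0, hs, -, -⟩ := id hmem
  obtain ⟨t0, -⟩ := twf_spec hn lam h0 hs D hD0 hD
  obtain ⟨T0, -⟩ := Trc_spec hn lam h0 hs D hD0 hD
  have hδ : 0 < ε * ((D - ε) / (2 * (n : ℝ))) := by
    have := hε.1; have := sub_pos.2 hε.2; positivity
  have key : ∀ a b : Fin n, (a : ℕ) < k → (b : ℕ) < k →
      twfD lam D + ε * ((D - ε) / (2 * (n : ℝ))) < lam a →
      twfD lam D + ε * ((D - ε) / (2 * (n : ℝ))) < lam b → lam a ≠ lam b →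
      (n * D) * (lam a * lam b * TrcD lam D * (2 + (lam a + lam b) * TrcD lam D)) =
      (∑ l, (lam l) ^ 2 / (1 + lam l * TrcD lam D) ^ 2) *
      ((1 + lam a * TrcD lam D) * (1 + lam b * TrcD lam D) *
        (1 + (lam a + lam b) * TrcD lam D)) := by
    intro a b hak hbk hat hbt hab
    rcases lt_or_gt_of_ne hab with h | h
    · exact active_rel n hn D ε hD0 hD hε k lam hmem hmax a b hak hbk hat h
    · have := active_rel n hn D ε hD0 hD hε k lam hmem hmax b a hbk hak hbt h
      linear_combination this
  have k1 := key i j hi hj hit hjt hij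
  have k2 := key i m hi hmk hit hmt him
  have hx : 0 < lam i := by linarith
  have hy : 0 < lam j := by linarith
  have hz : 0 < lam m := by linarith
  generalize (∑ l, (lam l) ^ 2 / (1 + lam l * TrcD lam D) ^ 2) = Q at k1 k2
  generalize TrcD lam D = T at *
  generalize lam i = x at *
  generalize lam j = y at *
  generalize lam m = z at *
  have hC : 0 < (n : ℝ) * D := by positivity
  generalize (n : ℝ) * D = C at *
  have hQ : Q ≠ 0 := by
    rintro rfl
    rw [zero_mul] at k1
    have : 0 < C * (x * y * T * (2 + (x + y) * T)) := by positivity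
    linarith
  have hfac : (C * Q * x * T * (1 + x * T) ^ 2 * (2 + (x + y + z) * T)) * (y - z) = 0 := by
    have h1 : C * (x * y * T * (2 + (x + y) * T)) *
        (Q * ((1 + x * T) * (1 + z * T) * (1 + (x + z) * T))) =
        C * (x * z * T * (2 + (x + z) * T)) *
        (Q * ((1 + x * T) * (1 + y * T) * (1 + (x + y) * T))) := by
      rw [k1, k2]; ring
    linear_combination h1
  have hne : C * Q * x * T * (1 + x * T) ^ 2 * (2 + (x + y + z) * T) ≠ 0 := by
    have : 0 < 2 + (x + y + z) * T := by positivity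
    have : 0 < 1 + x * T := by positivity
    positivity
  have := (mul_eq_zero.1 hfac).resolve_left hne
  linarith

/-- at a maximizer of `G(λ) = 𝐑_rc(λ, D*) - 𝐑_wf(λ, D*)` over `F_k`,
the coordinates take at most 5 distinct values. -/
theorem stmt_15 (n : ℕ) (hn : 1 ≤ n) (Dstar ε : ℝ)
    (hD : Dstar ∈ Set.Icc (0.005 : ℝ) 0.995) (hε : ε ∈ Set.Ioo (0 : ℝ) Dstar)
    (k : ℕ) (hk : k ≤ n) (lamStar : Fin n → ℝ)
    (hmem : Fk n k Dstar ε lamStar)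
    (hmax : ∀ lam : Fin n → ℝ, Fk n k Dstar ε lam →
      RRrc lam Dstar - RRwf lam Dstar ≤ RRrc lamStar Dstar - RRwf lamStar Dstar) :
    Nat.card (Set.range lamStar) ≤ 5 := by
  have hD0 : 0 < Dstar := lt_of_lt_of_le (by norm_num) hD.1
  have hD1 : Dstar < 1 := lt_of_le_of_lt hD.2 (by norm_num)
  have hin := inactive_eq n hn Dstar ε hD0 hD1 hε k lamStar hmem hmax
  have hac := active_two n hn Dstar ε hD0 hD1 hε k lamStar hmem hmax
  have hge := hmem.2.2.1
  set b := twfD lamStar Dstar + ε * ((Dstar - ε) / (2 * (n : ℝ))) with hb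
  obtain ⟨a1, h1⟩ : ∃ a1, ∀ i : Fin n, k ≤ (i : ℕ) → lamStar i = a1 := by
    by_cases h : ∃ i : Fin n, k ≤ (i : ℕ)
    · obtain ⟨i, hi⟩ := h
      exact ⟨lamStar i, fun j hj => hin j i hj hi⟩
    · push Not at h
      exact ⟨0, fun i hi => absurd (h i) (by omega)⟩
  obtain ⟨a2, a3, h2⟩ : ∃ a2 a3, ∀ i : Fin n, (i : ℕ) < k → b < lamStar i →
      lamStar i = a2 ∨ lamStar i = a3 := by
    by_cases h : ∃ i j : Fin n, (i : ℕ) < k ∧ (j : ℕ) < k ∧ b < lamStar i ∧ b < lamStar j ∧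
        lamStar i ≠ lamStar j
    · obtain ⟨i, j, hi, hj, hbi, hbj, hij⟩ := h
      refine ⟨lamStar i, lamStar j, fun m hm hbm => ?_⟩
      by_cases e : lamStar i = lamStar m
      · exact Or.inl e.symm
      · exact Or.inr (hac i j m hi hj hm hbi hbj hbm hij e).symm
    · push Not at h
      by_cases h' : ∃ i : Fin n, (i : ℕ) < k ∧ b < lamStar i
      · obtain ⟨i, hi, hbi⟩ := h'
        exact ⟨lamStar i, 0, fun j hj hbj => Or.inl (h j i hj hi hbj hbi)⟩
      · push Not at h'
        exact ⟨0, 0, fun j hj hbj => absurd (h' j hj) (not_le.2 hbj)⟩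
  have hsub : Set.range lamStar ⊆ (({a1, b, a2, a3} : Finset ℝ) : Set ℝ) := by
    rintro _ ⟨i, rfl⟩
    simp only [Finset.coe_insert, Finset.coe_singleton, Set.mem_insert_iff, Set.mem_singleton_iff]
    rcases le_or_gt k (i : ℕ) with h | h
    · exact Or.inl (h1 i h)
    · rcases (hge i h).lt_or_eq with e | e
      · exact Or.inr (Or.inr (h2 i h e))
      · exact Or.inr (Or.inl e.symm)
  rw [Nat.card_coe_set_eq]
  calc (Set.range lamStar).ncard ≤ ((({a1, b, a2, a3} : Finset ℝ) : Set ℝ)).ncard :=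
        Set.ncard_le_ncard hsub (Finset.finite_toSet _)
    _ = ({a1, b, a2, a3} : Finset ℝ).card := Set.ncard_coe_finset _
    _ ≤ 4 := Finset.card_le_four
    _ ≤ 5 := by norm_num
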